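/- Let a, b > 0 and let g : [0,∞) → [0,∞) be the inverse of the strictly increasing continuous bijection h(ξ) = ξ/(1 + a exp(−ξ²/b)) of [0,∞) onto itself. Then lim_{ζ→∞} g(ζ)/ζ = 1 and lim_{ζ→∞} (g(ζ)/ζ − 1)·ζ = 0, i.e., g(ζ) − ζ → 0 as ζ → ∞. -/

import Mathlib

open MeasureTheory Matrix Real Filter Topology ENNReal NNReal

noncomputable section

/-- Euclidean norm of a finite tuple. -/
def enorm2 {ι : Type*} [Fintype ι] (v : ι → ℝ) : ℝ := Real.sqrt (∑ i, v i ^ 2)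

/-- The `N(0, σ² I)` distribution on `ι → ℝ`, given by its Lebesgue density. -/
def gaussPi (ι : Type*) [Fintype ι] (σ2 : ℝ) : Measure (ι → ℝ) :=
  volume.withDensity fun x => ENNReal.ofReal
    ((2 * π * σ2) ^ (-(Fintype.card ι : ℝ) / 2) * Real.exp (-(enorm2 x) ^ 2 / (2 * σ2)))

/-- The Lebesgue density of the `N(0, σ² Q⁻¹)` distribution on `ι → ℝ`
(for `Q` symmetric positive definite). -/
def gaussCovDens {ι : Type*} [Fintype ι] [DecidableEq ι] (σ2 : ℝ) (Q : Matrix ι ι ℝ)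
    (x : ι → ℝ) : ℝ :=
  (2 * π * σ2) ^ (-(Fintype.card ι : ℝ) / 2) * Real.sqrt Q.det *
    Real.exp (-(x ⬝ᵥ Q.mulVec x) / (2 * σ2))

/-- The `N(0, σ² Q⁻¹)` distribution on `ι → ℝ` (for `Q` symmetric positive definite),
given by its Lebesgue density. -/
def gaussCov {ι : Type*} [Fintype ι] [DecidableEq ι] (σ2 : ℝ) (Q : Matrix ι ι ℝ) :
    Measure (ι → ℝ) :=
  volume.withDensity fun x => ENNReal.ofReal (gaussCovDens σ2 Q x)

open Classical in
/-- Symmetric positive semidefinite square root (junk value `0` off the psd cone). -/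
def msqrt {ι : Type*} [Fintype ι] [DecidableEq ι] (A : Matrix ι ι ℝ) : Matrix ι ι ℝ :=
  if h : A.PosSemidef then
    (h.1.eigenvectorUnitary : Matrix ι ι ℝ) * diagonal (Real.sqrt ∘ h.1.eigenvalues) *
      (star h.1.eigenvectorUnitary : Matrix ι ι ℝ)
  else 0

open Classical in
/-- Smallest eigenvalue of a symmetric matrix (junk value `0` otherwise). -/
def lamMin {ι : Type*} [Fintype ι] [DecidableEq ι] (A : Matrix ι ι ℝ) : ℝ :=
  if h : A.IsHermitian then ⨅ i, h.eigenvalues i else 0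

open Classical in
/-- Largest eigenvalue of a symmetric matrix (junk value `0` otherwise). -/
def lamMax {ι : Type*} [Fintype ι] [DecidableEq ι] (A : Matrix ι ι ℝ) : ℝ :=
  if h : A.IsHermitian then ⨆ i, h.eigenvalues i else 0

variable {n k₁ k₂ : ℕ}

/-- First block of columns of the design matrix. -/
def X1 (X : Matrix (Fin n) (Fin k₁ ⊕ Fin k₂) ℝ) : Matrix (Fin n) (Fin k₁) ℝ :=
  X.submatrix id Sum.inl

/-- Second block of columns of the design matrix. -/
def X2 (X : Matrix (Fin n) (Fin k₁ ⊕ Fin k₂) ℝ) : Matrix (Fin n) (Fin k₂) ℝ :=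
  X.submatrix id Sum.inr

/-- Unrestricted least squares estimator. -/
def betaU (X : Matrix (Fin n) (Fin k₁ ⊕ Fin k₂) ℝ) (Y : Fin n → ℝ) : (Fin k₁ ⊕ Fin k₂) → ℝ :=
  (Xᵀ * X)⁻¹.mulVec (Xᵀ.mulVec Y)

/-- Restricted least squares estimator. -/
def betaR (X : Matrix (Fin n) (Fin k₁ ⊕ Fin k₂) ℝ) (Y : Fin n → ℝ) : (Fin k₁ ⊕ Fin k₂) → ℝ :=
  Sum.elim (((X1 X)ᵀ * X1 X)⁻¹.mulVec ((X1 X)ᵀ.mulVec Y)) (fun _ => 0)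

/-- Risk estimate of the restricted model. -/
def rR (X : Matrix (Fin n) (Fin k₁ ⊕ Fin k₂) ℝ) (σ2 : ℝ) (Y : Fin n → ℝ) : ℝ :=
  Y ⬝ᵥ Y - betaR X Y ⬝ᵥ (Xᵀ * X).mulVec (betaR X Y) + σ2 * (2 * k₁ - n)

/-- Risk estimate of the unrestricted model. -/
def rU (X : Matrix (Fin n) (Fin k₁ ⊕ Fin k₂) ℝ) (σ2 : ℝ) (Y : Fin n → ℝ) : ℝ :=
  Y ⬝ᵥ Y - betaU X Y ⬝ᵥ (Xᵀ * X).mulVec (betaU X Y) + σ2 * (2 * (k₁ + k₂) - n)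

/-- The model averaging weight `λ̂`. -/
def lamHat (α σ2 : ℝ) (X : Matrix (Fin n) (Fin k₁ ⊕ Fin k₂) ℝ) (Y : Fin n → ℝ) : ℝ :=
  Real.exp (-(α * rR X σ2 Y) / σ2) /
    (Real.exp (-(α * rR X σ2 Y) / σ2) + Real.exp (-(α * rU X σ2 Y) / σ2))

/-- Leung and Barron's model averaging estimator `β̃`. -/
def mavg (α σ2 : ℝ) (X : Matrix (Fin n) (Fin k₁ ⊕ Fin k₂) ℝ) (Y : Fin n → ℝ) :
    (Fin k₁ ⊕ Fin k₂) → ℝ :=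
  lamHat α σ2 X Y • betaR X Y + (1 - lamHat α σ2 X Y) • betaU X Y

/-- Projection on the column space of `X₁`. -/
def projR (X : Matrix (Fin n) (Fin k₁ ⊕ Fin k₂) ℝ) : Matrix (Fin n) (Fin n) ℝ :=
  X1 X * ((X1 X)ᵀ * X1 X)⁻¹ * (X1 X)ᵀ

/-- Projection on the column space of `X`. -/
def projU (X : Matrix (Fin n) (Fin k₁ ⊕ Fin k₂) ℝ) : Matrix (Fin n) (Fin n) ℝ :=
  X * (Xᵀ * X)⁻¹ * Xᵀ

/-- The distribution `P_{n,β,σ}` of `Y = Xβ + u`, `u ~ N(0, σ² Iₙ)`. -/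
def Pmeas (X : Matrix (Fin n) (Fin k₁ ⊕ Fin k₂) ℝ) (β : (Fin k₁ ⊕ Fin k₂) → ℝ) (σ2 : ℝ) :
    Measure (Fin n → ℝ) :=
  (gaussPi (Fin n) σ2).map (fun u => X.mulVec β + u)

/-- The function `h_{a,b}(ξ) = ξ / (1 + a exp(−ξ²/b))`. -/
def hfun (a b ξ : ℝ) : ℝ := ξ / (1 + a * Real.exp (-ξ ^ 2 / b))

/-- The inverse `g_{a,b}` of `h_{a,b}`. -/
def gfun (a b : ℝ) : ℝ → ℝ := Function.invFun (hfun a b)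

open Classical in
/-- `g(‖w‖) w / ‖w‖`, with the convention that this is `0` for `w = 0`. -/
def gdir (a b : ℝ) {ι : Type*} [Fintype ι] (w : ι → ℝ) : ι → ℝ :=
  if w = 0 then 0 else (gfun a b (enorm2 w) / enorm2 w) • w


/-- The finite-sample density `f_{n,β,σ}` of `√n(β̃ − β)` (Theorem 3 of the paper). -/
def fdens {n k₁ k₂ : ℕ} (X : Matrix (Fin n) (Fin k₁ ⊕ Fin k₂) ℝ)
    (β : (Fin k₁ ⊕ Fin k₂) → ℝ) (σ2 α : ℝ) (t : (Fin k₁ ⊕ Fin k₂) → ℝ) : ℝ :=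
  let a := Real.exp (2 * α * k₂)
  let b := σ2 / α
  let S := (X2 X)ᵀ * (1 - projR X) * X2 X
  let w := (Real.sqrt n)⁻¹ • (msqrt S).mulVec ((t ∘ Sum.inr) + Real.sqrt n • (β ∘ Sum.inr))
  (2 * π * σ2) ^ (-((k₁ : ℝ) + k₂) / 2) * Real.sqrt (((n : ℝ)⁻¹ • (Xᵀ * X)).det) *
    Real.exp (-(enorm2 ((Real.sqrt n)⁻¹ •
        ((msqrt ((X1 X)ᵀ * X1 X)).mulVec (t ∘ Sum.inl) +
          ((msqrt ((X1 X)ᵀ * X1 X))⁻¹ * (X1 X)ᵀ * X2 X).mulVec (t ∘ Sum.inr)))) ^ 2 /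
      (2 * σ2)) *
    (1 + Real.exp (-(α / σ2) * gfun a b (enorm2 w) ^ 2 + 2 * α * k₂)) ^ (k₂ : ℕ) *
    (1 + (2 * α / σ2) * gfun a b (enorm2 w) ^ 2 *
        (1 + Real.exp ((α / σ2) * gfun a b (enorm2 w) ^ 2 - 2 * α * k₂))⁻¹)⁻¹ *
    Real.exp (-(enorm2 (gdir a b w - (msqrt S).mulVec (β ∘ Sum.inr))) ^ 2 / (2 * σ2))

/-- The density `f_{∞,γ}` of the limiting distribution (formula (13) of the paper),
stated for a general symmetric positive definite matrix in place of `Q`. -/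
def fInfty {k₁ k₂ : ℕ} (Q : Matrix (Fin k₁ ⊕ Fin k₂) (Fin k₁ ⊕ Fin k₂) ℝ) (σ2 α : ℝ)
    (γ : Fin k₂ → ℝ) (t : (Fin k₁ ⊕ Fin k₂) → ℝ) : ℝ :=
  let a := Real.exp (2 * α * k₂)
  let b := σ2 / α
  let S := Q.toBlocks₂₂ - Q.toBlocks₂₁ * Q.toBlocks₁₁⁻¹ * Q.toBlocks₁₂
  let w := (msqrt S).mulVec ((t ∘ Sum.inr) + γ)
  (2 * π * σ2) ^ (-((k₁ : ℝ) + k₂) / 2) * Real.sqrt Q.det *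
    Real.exp (-(enorm2 ((msqrt Q.toBlocks₁₁).mulVec (t ∘ Sum.inl) +
        ((msqrt Q.toBlocks₁₁)⁻¹ * Q.toBlocks₁₂).mulVec (t ∘ Sum.inr))) ^ 2 / (2 * σ2)) *
    (1 + Real.exp (-(α / σ2) * gfun a b (enorm2 w) ^ 2 + 2 * α * k₂)) ^ (k₂ : ℕ) *
    (1 + (2 * α / σ2) * gfun a b (enorm2 w) ^ 2 *
        (1 + Real.exp ((α / σ2) * gfun a b (enorm2 w) ^ 2 - 2 * α * k₂))⁻¹)⁻¹ *
    Real.exp (-(enorm2 (gdir a b w - (msqrt S).mulVec γ)) ^ 2 / (2 * σ2))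


/-- The limiting law (12): the distribution of
`B_∞γ + C_∞Z₁ + [1 + exp(2αk₂) exp(−α‖Z₂ + (Q₂₂ − Q₂₁Q₁₁⁻¹Q₁₂)^{1/2}γ‖²/σ²)]⁻¹
  · (D_∞Z₂ − B_∞γ)` with `Z₁ ~ N(0, σ²I_{k₁})`, `Z₂ ~ N(0, σ²I_{k₂})` independent. -/
def limitLaw {k₁ k₂ : ℕ} (Q : Matrix (Fin k₁ ⊕ Fin k₂) (Fin k₁ ⊕ Fin k₂) ℝ) (σ2 α : ℝ)
    (γ : Fin k₂ → ℝ) : Measure ((Fin k₁ ⊕ Fin k₂) → ℝ) :=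
  ((gaussPi (Fin k₁) σ2).prod (gaussPi (Fin k₂) σ2)).map
    (fun Z : (Fin k₁ → ℝ) × (Fin k₂ → ℝ) =>
      (fromRows (Q.toBlocks₁₁⁻¹ * Q.toBlocks₁₂) (-1)).mulVec γ +
      (fromRows (msqrt Q.toBlocks₁₁)⁻¹ 0).mulVec Z.1 +
      (1 + Real.exp (2 * α * k₂) *
          Real.exp (-α * (enorm2 (Z.2 +
            (msqrt (Q.toBlocks₂₂ - Q.toBlocks₂₁ * Q.toBlocks₁₁⁻¹ * Q.toBlocks₁₂)).mulVec
              γ)) ^ 2 / σ2))⁻¹ •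
        ((fromRows
            (-(Q.toBlocks₁₁⁻¹ * Q.toBlocks₁₂ *
              (msqrt (Q.toBlocks₂₂ - Q.toBlocks₂₁ * Q.toBlocks₁₁⁻¹ * Q.toBlocks₁₂))⁻¹))
            ((msqrt (Q.toBlocks₂₂ - Q.toBlocks₂₁ * Q.toBlocks₁₁⁻¹ * Q.toBlocks₁₂))⁻¹)).mulVec
            Z.2 -
          (fromRows (Q.toBlocks₁₁⁻¹ * Q.toBlocks₁₂) (-1)).mulVec γ))


/-!
The denominator of `h` tends to `1` so fast that `h ξ - ξ → 0`. Moreover `h (g ζ) = ζ` and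
`g ζ → ∞`, so substituting `ξ = g ζ` gives `ζ - g ζ → 0`; dividing by `ζ` gives `g ζ / ζ → 1`.
-/

lemma tendsto_sub_self_of_rightInverse {G : Type*} [AddGroup G] [TopologicalSpace G]
    [ContinuousNeg G] {h g : G → G} {l l' : Filter G} {c : G} (hgh : Function.RightInverse g h)
    (hg : Tendsto g l' l) (hh : Tendsto (fun x => h x - x) l (𝓝 c)) :
    Tendsto (fun y => g y - y) l' (𝓝 (-c)) :=
  (hh.comp hg).neg.congr fun y => by simp only [Function.comp_apply, hgh y, neg_sub]

lemma tendsto_div_nhds_one_of_tendsto_sub {α 𝕜 : Type*} [Field 𝕜] [LinearOrder 𝕜]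
    [IsStrictOrderedRing 𝕜] [TopologicalSpace 𝕜] [OrderTopology 𝕜] {f u : α → 𝕜} {l : Filter α}
    {c : 𝕜} (hu : Tendsto u l atTop) (hf : Tendsto (fun x => f x - u x) l (𝓝 c)) :
    Tendsto (fun x => f x / u x) l (𝓝 1) := by
  have hlim : Tendsto (fun x => 1 + (f x - u x) / u x) l (𝓝 1) := by
    simpa only [add_zero] using (hf.div_atTop hu).const_add 1
  refine hlim.congr' ?_
  filter_upwards [hu.eventually_ne_atTop 0] with x hx
  rw [one_add_div hx, add_sub_cancel]

lemma tendsto_exp_neg_sq_div_atTop {b : ℝ} (hb : 0 < b) :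
    Tendsto (fun ξ : ℝ => exp (-ξ ^ 2 / b)) atTop (𝓝 0) :=
  tendsto_exp_atBot.comp <|
    (tendsto_neg_atTop_atBot.comp (tendsto_pow_atTop two_ne_zero)).atBot_div_const hb

lemma tendsto_mul_exp_neg_sq_div_atTop {b : ℝ} (hb : 0 < b) :
    Tendsto (fun ξ : ℝ => ξ * exp (-ξ ^ 2 / b)) atTop (𝓝 0) := by
  have hlim := (tendsto_rpow_abs_mul_exp_neg_mul_sq_cocompact (inv_pos.mpr hb) 1).mono_left
    atTop_le_cocompact
  refine hlim.congr' ?_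
  filter_upwards [eventually_ge_atTop 0] with ξ hξ
  rw [Real.rpow_one, abs_of_nonneg hξ, neg_mul, inv_mul_eq_div, neg_div]

section hfun

variable {a b : ℝ}

lemma hfun_neg (a b ξ : ℝ) : hfun a b (-ξ) = -hfun a b ξ := by
  simp only [hfun, neg_sq, neg_div]

lemma min_one_one_add_le_one_add_mul_exp (a : ℝ) (hb : 0 ≤ b) (ξ : ℝ) :
    min 1 (1 + a) ≤ 1 + a * exp (-ξ ^ 2 / b) := by
  have hexp : exp (-ξ ^ 2 / b) ≤ 1 :=
    exp_le_one_iff.mpr (div_nonpos_of_nonpos_of_nonneg (neg_nonpos.mpr (sq_nonneg ξ)) hb)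
  rcases le_total 0 a with ha | ha
  · exact (min_le_left _ _).trans (le_add_of_nonneg_right (mul_nonneg ha (exp_nonneg _)))
  · exact (min_le_right _ _).trans (add_le_add_right (le_mul_of_le_one_right ha hexp) 1)

lemma min_one_one_add_pos (ha : -1 < a) : 0 < min 1 (1 + a) :=
  lt_min one_pos (by linarith)

lemma one_add_mul_exp_pos (ha : -1 < a) (hb : 0 ≤ b) (ξ : ℝ) :
    0 < 1 + a * exp (-ξ ^ 2 / b) :=
  (min_one_one_add_pos ha).trans_le (min_one_one_add_le_one_add_mul_exp a hb ξ)

lemma continuous_hfun (ha : -1 < a) (hb : 0 ≤ b) : Continuous (hfun a b) :=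
  continuous_id.div (by fun_prop) fun ξ => (one_add_mul_exp_pos ha hb ξ).ne'

lemma tendsto_hfun_sub_self (a : ℝ) (hb : 0 < b) :
    Tendsto (fun ξ => hfun a b ξ - ξ) atTop (𝓝 0) := by
  have hden : Tendsto (fun ξ : ℝ => 1 + a * exp (-ξ ^ 2 / b)) atTop (𝓝 1) := by
    simpa only [mul_zero, add_zero] using
      ((tendsto_exp_neg_sq_div_atTop hb).const_mul a).const_add 1
  have hlim : Tendsto (fun ξ : ℝ => -a * (ξ * exp (-ξ ^ 2 / b)) / (1 + a * exp (-ξ ^ 2 / b)))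
      atTop (𝓝 0) := by
    simpa only [Pi.div_def, mul_zero, zero_div] using
      ((tendsto_mul_exp_neg_sq_div_atTop hb).const_mul (-a)).div hden one_ne_zero
  refine hlim.congr' ?_
  filter_upwards [hden.eventually_ne one_ne_zero] with ξ hξ
  rw [hfun, div_sub' hξ]
  ring

lemma tendsto_hfun_atTop (a : ℝ) (hb : 0 < b) : Tendsto (hfun a b) atTop atTop := by
  simpa only [id, sub_add_cancel] using (tendsto_hfun_sub_self a hb).add_atTop tendsto_id

lemma tendsto_hfun_atBot (a : ℝ) (hb : 0 < b) : Tendsto (hfun a b) atBot atBot := by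
  have hneg := tendsto_neg_atTop_atBot.comp
    ((tendsto_hfun_atTop a hb).comp tendsto_neg_atBot_atTop)
  exact hneg.congr fun ξ => by simp only [Function.comp_apply, hfun_neg, neg_neg]

lemma hfun_surjective (ha : -1 < a) (hb : 0 < b) : Function.Surjective (hfun a b) :=
  (continuous_hfun ha hb.le).surjective (tendsto_hfun_atTop a hb) (tendsto_hfun_atBot a hb)

end hfun

section gfun

variable {a b : ℝ}

/-- For `a` close to `-1` the map `h` is onto but not injective, and `g` is then only a choice
of right inverse. -/
lemma rightInverse_gfun (ha : -1 < a) (hb : 0 < b) :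
    Function.RightInverse (gfun a b) (hfun a b) :=
  Function.rightInverse_invFun (hfun_surjective ha hb)

lemma gfun_eq_mul (ha : -1 < a) (hb : 0 < b) (ζ : ℝ) :
    gfun a b ζ = ζ * (1 + a * exp (-gfun a b ζ ^ 2 / b)) :=
  (div_eq_iff (one_add_mul_exp_pos ha hb.le _).ne').mp (rightInverse_gfun ha hb ζ)

lemma tendsto_gfun_atTop (ha : -1 < a) (hb : 0 < b) : Tendsto (gfun a b) atTop atTop := by
  refine tendsto_atTop_mono' atTop ?_ (tendsto_id.atTop_mul_const (min_one_one_add_pos ha))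
  filter_upwards [eventually_ge_atTop 0] with ζ hζ
  rw [gfun_eq_mul ha hb ζ]
  exact mul_le_mul_of_nonneg_left (min_one_one_add_le_one_add_mul_exp a hb.le _) hζ

lemma tendsto_gfun_sub_self (ha : -1 < a) (hb : 0 < b) :
    Tendsto (fun ζ => gfun a b ζ - ζ) atTop (𝓝 0) := by
  simpa only [neg_zero] using tendsto_sub_self_of_rightInverse (rightInverse_gfun ha hb)
    (tendsto_gfun_atTop ha hb) (tendsto_hfun_sub_self a hb)

end gfun

theorem statement18_general (a b : ℝ) (ha : -1 < a) (hb : 0 < b) :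
    Tendsto (fun ζ : ℝ => gfun a b ζ / ζ) atTop (𝓝 (1 : ℝ)) ∧
    Tendsto (fun ζ : ℝ => (gfun a b ζ / ζ - 1) * ζ) atTop (𝓝 (0 : ℝ)) ∧
    Tendsto (fun ζ : ℝ => gfun a b ζ - ζ) atTop (𝓝 (0 : ℝ)) := by
  have hsub := tendsto_gfun_sub_self ha hb
  refine ⟨tendsto_div_nhds_one_of_tendsto_sub tendsto_id hsub, hsub.congr' ?_, hsub⟩
  filter_upwards [eventually_ne_atTop 0] with ζ hζ
  rw [sub_mul, div_mul_cancel₀ _ hζ, one_mul]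

/-- `g(ζ)/ζ → 1` and `(g(ζ)/ζ − 1)ζ → 0`, i.e. `g(ζ) − ζ → 0`, as `ζ → ∞`. -/
theorem statement18 (a b : ℝ) (ha : 0 < a) (hb : 0 < b) :
    Tendsto (fun ζ : ℝ => gfun a b ζ / ζ) atTop (𝓝 (1 : ℝ)) ∧
    Tendsto (fun ζ : ℝ => (gfun a b ζ / ζ - 1) * ζ) atTop (𝓝 (0 : ℝ)) ∧
    Tendsto (fun ζ : ℝ => gfun a b ζ - ζ) atTop (𝓝 (0 : ℝ)) :=
  statement18_general a b (by linarith) hb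

end
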